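/- (Theorem 1) Let σ_N > 0, σ_S > 0 and set ρ = σ_S²/σ_N². The mutual information I_XY := h_Y − h_{Y|X}, where h_Y = −∫₀^∞ p_Y(y) log p_Y(y) dy with p_Y(y) = ∫₀^∞ p_{Y|X}(y|x) p_X(x) dx, and h_{Y|X} = −∫₀^∞ p_X(x) ( ∫₀^∞ p_{Y|X}(y|x) log p_{Y|X}(y|x) dy ) dx, is given in closed form by I_XY = log( ρ · √(1 + ρ⁻¹) ) + ρ⁻¹ · log √(1 + ρ) − ρ + ρ⁻¹ · √(1 + ρ⁻¹) · F(ρ) + ψ(ρ⁻¹) − ψ(1) − 1, where F(ρ) = ∫₀^∞ ξ · K₁(√(1 + ρ⁻¹) · ξ) · I₁(ξ) · log I₁(ξ) dξ. -/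

import Mathlib

open Real MeasureTheory Set Filter

/-- Modified Bessel function of the first kind of order one,
`I₁(z) = ∑_{k=0}^∞ (z/2)^(2k+1) / (k! (k+1)!)`. -/
noncomputable def besselI1 (z : ℝ) : ℝ :=
  ∑' k : ℕ, (z / 2) ^ (2 * k + 1) / ((Nat.factorial k : ℝ) * (Nat.factorial (k + 1) : ℝ))

/-- Modified Bessel function of the second kind of order one,
`K₁(z) = ∫₀^∞ exp (−z cosh t) cosh t dt`. -/
noncomputable def besselK1 (z : ℝ) : ℝ :=
  ∫ t in Ioi (0 : ℝ), Real.exp (-z * Real.cosh t) * Real.cosh t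

/-- Digamma function `ψ(x) = d/dx log Γ(x)`. -/
noncomputable def digamma (x : ℝ) : ℝ :=
  deriv (fun y : ℝ => Real.log (Real.Gamma y)) x

/-- Conditional output density of the noncentral chi channel with four degrees of freedom. -/
noncomputable def condDensity (σN x y : ℝ) : ℝ :=
  (2 / σN ^ 2) * (y ^ 2 / x) * Real.exp (-(x ^ 2 + y ^ 2) / σN ^ 2) *
    besselI1 (2 * x * y / σN ^ 2)

/-- Rayleigh input density with mean-square `σS²`. -/
noncomputable def rayleighDensity (σS x : ℝ) : ℝ :=
  (2 * x / σS ^ 2) * Real.exp (-x ^ 2 / σS ^ 2)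

/-- `F(ρ) = ∫₀^∞ ξ K₁(√(1+ρ⁻¹) ξ) I₁(ξ) log I₁(ξ) dξ`. -/
noncomputable def Fint (ρ : ℝ) : ℝ :=
  ∫ ξ in Ioi (0 : ℝ),
    ξ * besselK1 (Real.sqrt (1 + ρ⁻¹) * ξ) * besselI1 ξ * Real.log (besselI1 ξ)

/-- Closed-form mutual information of Theorem 1. -/
noncomputable def Ixy (ρ : ℝ) : ℝ :=
  Real.log (ρ * Real.sqrt (1 + ρ⁻¹)) + ρ⁻¹ * Real.log (Real.sqrt (1 + ρ)) - ρ +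
    ρ⁻¹ * Real.sqrt (1 + ρ⁻¹) * Fint ρ + digamma ρ⁻¹ - digamma 1 - 1

/-!
Averaging the conditional density over the input with the help of `∫ exp (-b x²) I₁(c x) dx` shows
that the output density is `2 y / σS²` times a difference of two Gaussians, i.e. a Gaussian times
`1 - exp (-κ y²)`. Hence `log p_Y` needs only Rayleigh moments, which come from `Γ` and `Γ'`, and
the mean of `log (1 - exp (-κ Y²))`, which after `t = κ y²`, `w = exp (-t)` is the derivative of the
Beta function in its second argument; these are the sources of the digamma terms.

In `log p_{Y|X}` everything but `log I₁(2 x y / σN²)` is again a moment of `X` or `Y`. The last mean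
is taken over the joint density in the variable `ξ = 2 x y / σN²`: for fixed `ξ` the integral over
`x` is `∫ x⁻³ exp (-(p² x² + q² / x²)) dx`, a Bessel function `K₁`, and what is left is `F`.
-/

/-- The measure against which all input and output amplitudes are integrated. -/
local notation "vol₊" => (volume.restrict (Ioi (0 : ℝ)) : Measure ℝ)

theorem integral_smul_comp_mul_left_Ioi_zero {E : Type*} [NormedAddCommGroup E] [NormedSpace ℝ E]
    (g : ℝ → E) {a : ℝ} (ha : 0 < a) :
    ∫ y in Ioi (0 : ℝ), a • g (a * y) = ∫ y in Ioi (0 : ℝ), g y := by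
  rw [integral_smul, integral_comp_mul_left_Ioi g 0 ha, mul_zero, smul_inv_smul₀ ha.ne']

/-- `f` is integrable with Bochner integral `v`, in analogy with `HasSum`. Unlike the bare equation
`∫ x, f x ∂μ = v`, this cannot hold through the value `0` given to divergent integrals. -/
structure HasBochnerIntegral {α E : Type*} [MeasurableSpace α] [NormedAddCommGroup E]
    [NormedSpace ℝ E] (f : α → E) (v : E) (μ : Measure α) : Prop where
  integrable : Integrable f μ
  integral_eq : ∫ x, f x ∂μ = v

namespace HasBochnerIntegral

section Basic

variable {α E : Type*} [MeasurableSpace α] [NormedAddCommGroup E] [NormedSpace ℝ E]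
  {μ : Measure α} {f g : α → E} {v w : E}

theorem of_integral_eq_of_ne_zero (h : ∫ x, f x ∂μ = v) (hv : v ≠ 0) :
    HasBochnerIntegral f v μ :=
  ⟨.of_integral_ne_zero (h ▸ hv), h⟩

theorem add (hf : HasBochnerIntegral f v μ) (hg : HasBochnerIntegral g w μ) :
    HasBochnerIntegral (fun x => f x + g x) (v + w) μ :=
  ⟨hf.integrable.add hg.integrable, by
    rw [integral_add hf.integrable hg.integrable, hf.integral_eq, hg.integral_eq]⟩

theorem sub (hf : HasBochnerIntegral f v μ) (hg : HasBochnerIntegral g w μ) :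
    HasBochnerIntegral (fun x => f x - g x) (v - w) μ :=
  ⟨hf.integrable.sub hg.integrable, by
    rw [integral_sub hf.integrable hg.integrable, hf.integral_eq, hg.integral_eq]⟩

theorem const_mul {𝕜 : Type*} [RCLike 𝕜] {f : α → 𝕜} {v : 𝕜} (c : 𝕜)
    (hf : HasBochnerIntegral f v μ) : HasBochnerIntegral (fun x => c * f x) (c * v) μ :=
  ⟨hf.integrable.const_mul c, by rw [integral_const_mul, hf.integral_eq]⟩

theorem congr_val (hf : HasBochnerIntegral f v μ) (hvw : v = w) : HasBochnerIntegral f w μ :=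
  hvw ▸ hf

theorem congr_ae (hf : HasBochnerIntegral f v μ) (hfg : f =ᵐ[μ] g) : HasBochnerIntegral g v μ :=
  ⟨hf.integrable.congr hfg, by rw [← integral_congr_ae hfg, hf.integral_eq]⟩

theorem congr_on {s : Set α} (hf : HasBochnerIntegral f v (μ.restrict s)) (hs : MeasurableSet s)
    (hfg : EqOn f g s) : HasBochnerIntegral g v (μ.restrict s) :=
  hf.congr_ae (ae_restrict_of_forall_mem hs hfg)

theorem of_hasSum_of_nonneg {ι : Type*} [Countable ι] {f : ι → α → ℝ} {F : α → ℝ} {v : ι → ℝ}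
    {w : ℝ} (hf : ∀ i, HasBochnerIntegral (f i) (v i) μ) (hf₀ : ∀ i, 0 ≤ᵐ[μ] f i)
    (hF : ∀ᵐ x ∂μ, HasSum (fun i => f i x) (F x)) (hw : HasSum v w) :
    HasBochnerIntegral F w μ := by
  have hv₀ (i : ι) : 0 ≤ v i := (hf i).integral_eq ▸ integral_nonneg_of_ae (hf₀ i)
  have hf₀' : ∀ᵐ x ∂μ, ∀ i, 0 ≤ f i x := ae_all_iff.2 hf₀
  have hF₀ : 0 ≤ᵐ[μ] F := by
    filter_upwards [hF, hf₀'] with x hx hx₀ using hx.nonneg hx₀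
  have hlintegral : ∫⁻ x, ENNReal.ofReal (F x) ∂μ = ENNReal.ofReal w := calc
    ∫⁻ x, ENNReal.ofReal (F x) ∂μ = ∫⁻ x, ∑' i, ENNReal.ofReal (f i x) ∂μ := by
      refine lintegral_congr_ae ?_
      filter_upwards [hF, hf₀'] with x hx hx₀
      rw [← hx.tsum_eq, ENNReal.ofReal_tsum_of_nonneg hx₀ hx.summable]
    _ = ∑' i, ENNReal.ofReal (v i) := by
      rw [lintegral_tsum fun i => (hf i).integrable.aemeasurable.ennreal_ofReal]
      refine tsum_congr fun i => ?_
      rw [← (hf i).integral_eq, ofReal_integral_eq_lintegral_ofReal (hf i).integrable (hf₀ i)]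
    _ = ENNReal.ofReal w := by rw [← hw.tsum_eq, ENNReal.ofReal_tsum_of_nonneg hv₀ hw.summable]
  have hmeas : AEMeasurable F μ := aemeasurable_of_tendsto_metrizable_ae atTop
    (fun s : Finset ι => s.aemeasurable_fun_sum fun i _ => (hf i).integrable.aemeasurable) hF
  refine ⟨(lintegral_ofReal_ne_top_iff_integrable hmeas.aestronglyMeasurable hF₀).1
    (hlintegral ▸ ENNReal.ofReal_ne_top), ?_⟩
  rw [integral_eq_lintegral_of_nonneg_ae hF₀ hmeas.aestronglyMeasurable, hlintegral,
    ENNReal.toReal_ofReal (hw.nonneg hv₀)]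

end Basic

section Prod

variable {α β E : Type*} [MeasurableSpace α] [MeasurableSpace β] [NormedAddCommGroup E]
  [NormedSpace ℝ E] {μ : Measure α} {ν : Measure β} [SFinite μ] [SFinite ν] {v : E}

theorem smul_comp_fst [CompleteSpace E] {J : α × β → ℝ} {p : α → ℝ} {g : α → E}
    (hJ : AEStronglyMeasurable J (μ.prod ν)) (hg : AEStronglyMeasurable g μ)
    (hJ₀ : 0 ≤ᵐ[μ.prod ν] J) (hJp : ∀ᵐ x ∂μ, HasBochnerIntegral (fun y => J (x, y)) (p x) ν)
    (h : HasBochnerIntegral (fun x => p x • g x) v μ) :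
    HasBochnerIntegral (fun z => J z • g z.1) v (μ.prod ν) := by
  have hint : Integrable (fun z => J z • g z.1) (μ.prod ν) := by
    rw [integrable_prod_iff (hJ.fun_smul hg.comp_fst)]
    refine ⟨hJp.mono fun x hx => hx.integrable.smul_const (g x), h.integrable.norm.congr ?_⟩
    filter_upwards [hJp, Measure.ae_ae_of_ae_prod hJ₀] with x hx hx₀
    have hnorm : (fun y => ‖J (x, y) • g x‖) =ᵐ[ν] fun y => J (x, y) * ‖g x‖ := by
      filter_upwards [hx₀] with y hy
      rw [norm_smul, Real.norm_of_nonneg hy]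
    rw [integral_congr_ae hnorm, integral_mul_const, norm_smul, ← hx.integral_eq,
      Real.norm_of_nonneg (integral_nonneg_of_ae hx₀)]
  refine ⟨hint, ?_⟩
  rw [integral_prod _ hint, ← h.integral_eq]
  exact integral_congr_ae (hJp.mono fun x hx => by
    simp only [integral_smul_const, hx.integral_eq])

theorem smul_comp_snd [CompleteSpace E] {J : α × β → ℝ} {p : β → ℝ} {g : β → E}
    (hJ : AEStronglyMeasurable J (μ.prod ν)) (hg : AEStronglyMeasurable g ν)
    (hJ₀ : 0 ≤ᵐ[μ.prod ν] J) (hJp : ∀ᵐ y ∂ν, HasBochnerIntegral (fun x => J (x, y)) (p y) μ)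
    (h : HasBochnerIntegral (fun y => p y • g y) v ν) :
    HasBochnerIntegral (fun z => J z • g z.2) v (μ.prod ν) := by
  have hswap := smul_comp_fst hJ.prod_swap hg
    (Measure.measurePreserving_swap.quasiMeasurePreserving.ae hJ₀) hJp h
  exact ⟨hswap.integrable.swap, by rw [← hswap.integral_eq, ← integral_prod_swap]; rfl⟩

theorem comp_mul_snd {f : α × ℝ → E} {r : α → ℝ} (hf : StronglyMeasurable f) (hr : Measurable r)
    (hr₀ : ∀ᵐ x ∂μ, 0 < r x) (h : HasBochnerIntegral f v (μ.prod vol₊)) :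
    HasBochnerIntegral (fun z => r z.1 • f (z.1, r z.1 * z.2)) v (μ.prod vol₊) := by
  have hmeas : StronglyMeasurable fun z : α × ℝ => r z.1 • f (z.1, r z.1 * z.2) :=
    (hr.comp measurable_fst).stronglyMeasurable.smul (hf.comp_measurable (by fun_prop))
  have hint : Integrable (fun z : α × ℝ => r z.1 • f (z.1, r z.1 * z.2)) (μ.prod vol₊) := by
    rw [integrable_prod_iff hmeas.aestronglyMeasurable]
    constructor
    · filter_upwards [h.integrable.prod_right_ae, hr₀] with x hx hrx
      have := (integrableOn_Ioi_comp_mul_left_iff (fun y => f (x, y)) 0 hrx).2 (by rwa [mul_zero])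
      exact this.smul (r x)
    · refine h.integrable.integral_norm_prod_left.congr (hr₀.mono fun x hrx => ?_)
      simp only [norm_smul, Real.norm_of_nonneg hrx.le]
      exact (integral_smul_comp_mul_left_Ioi_zero (fun y => ‖f (x, y)‖) hrx).symm
  refine ⟨hint, ?_⟩
  rw [integral_prod _ hint, ← h.integral_eq, integral_prod _ h.integrable]
  exact integral_congr_ae (hr₀.mono fun x hrx =>
    integral_smul_comp_mul_left_Ioi_zero (fun y => f (x, y)) hrx)

end Prod

theorem image_iff {E : Type*} [NormedAddCommGroup E] [NormedSpace ℝ E] {s : Set ℝ}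
    {φ φ' : ℝ → ℝ} (hs : MeasurableSet s) (hφ' : ∀ x ∈ s, HasDerivWithinAt φ (φ' x) s x)
    (hφ : InjOn φ s) {g : ℝ → E} {v : E} :
    HasBochnerIntegral g v (volume.restrict (φ '' s)) ↔
      HasBochnerIntegral (fun x => |φ' x| • g (φ x)) v (volume.restrict s) := by
  have hint := integrableOn_image_iff_integrableOn_abs_deriv_smul hs hφ' hφ g
  have heq := integral_image_eq_integral_abs_deriv_smul hs hφ' hφ g
  exact ⟨fun h => ⟨hint.1 h.integrable, heq ▸ h.integral_eq⟩,
    fun h => ⟨hint.2 h.integrable, heq.trans h.integral_eq⟩⟩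

theorem comp_mul_sq {E : Type*} [NormedAddCommGroup E] [NormedSpace ℝ E] {g : ℝ → E} {v : E}
    {b : ℝ} (hb : 0 < b) (h : HasBochnerIntegral g v vol₊) :
    HasBochnerIntegral (fun x => (2 * b * x) • g (b * x ^ 2)) v vol₊ := by
  have himage : (fun x : ℝ => b * x ^ 2) '' Ioi 0 = Ioi 0 := by
    ext y
    refine ⟨fun ⟨x, (hx : 0 < x), hxy⟩ => hxy ▸ mem_Ioi.2 (by positivity),
      fun (hy : 0 < y) => ⟨√(y / b), mem_Ioi.2 (by positivity), ?_⟩⟩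
    simp only [Real.sq_sqrt (div_pos hy hb).le, mul_div_cancel₀ _ hb.ne']
  have hinj : InjOn (fun x : ℝ => b * x ^ 2) (Ioi 0) :=
    fun x (hx : 0 < x) y (hy : 0 < y) hxy =>
      (pow_left_inj₀ hx.le hy.le two_ne_zero).1 (mul_left_cancel₀ hb.ne' hxy)
  have hderiv : ∀ x ∈ Ioi (0 : ℝ),
      HasDerivWithinAt (fun x : ℝ => b * x ^ 2) (2 * b * x) (Ioi 0) x := fun x _ =>
    (((hasDerivAt_pow 2 x).const_mul b).congr_deriv (by push_cast; ring)).hasDerivWithinAt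
  rw [← himage, image_iff measurableSet_Ioi hderiv hinj] at h
  exact h.congr_on measurableSet_Ioi fun x (hx : 0 < x) => by
    simp only [abs_of_pos (show 0 < 2 * b * x by positivity)]

end HasBochnerIntegral

section BesselI1

open Nat

theorem factorial_two_mul_le_four_pow_mul (k : ℕ) : (2 * k)! ≤ 4 ^ k * (k ! * (k + 1)!) := by
  calc (2 * k)! = (2 * k).choose k * (k ! * k !) := by
        have := Nat.choose_mul_factorial_mul_factorial (show k ≤ 2 * k by lia)
        rwa [show 2 * k - k = k by lia, mul_assoc, eq_comm] at this
    _ ≤ 2 ^ (2 * k) * (k ! * (k + 1)!) := by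
        gcongr
        · exact Nat.choose_le_two_pow _ _
        · exact k.le_succ
    _ = 4 ^ k * (k ! * (k + 1)!) := by norm_num [pow_mul]

theorem besselI1_term_le {z : ℝ} (hz : 0 ≤ z) (k : ℕ) :
    (z / 2) ^ (2 * k + 1) / (k ! * (k + 1)! : ℝ) ≤ z / 2 * (z ^ (2 * k) / (2 * k)!) := by
  have hfac : ((2 * k)! : ℝ) ≤ 4 ^ k * (k ! * (k + 1)!) :=
    mod_cast factorial_two_mul_le_four_pow_mul k
  calc (z / 2) ^ (2 * k + 1) / (k ! * (k + 1)! : ℝ)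
      = z / 2 * (z ^ (2 * k) / (4 ^ k * (k ! * (k + 1)!))) := by
        rw [pow_succ, div_pow, pow_mul 2 2 k, show (2 : ℝ) ^ 2 = 4 by norm_num]
        field_simp
    _ ≤ z / 2 * (z ^ (2 * k) / (2 * k)!) := by gcongr

theorem hasSum_besselI1 (z : ℝ) :
    HasSum (fun k : ℕ => (z / 2) ^ (2 * k + 1) / (k ! * (k + 1)! : ℝ)) (besselI1 z) := by
  refine (Summable.of_norm_bounded ((hasSum_cosh |z|).summable.mul_left (|z| / 2))
    fun k => ?_).hasSum
  simpa [abs_div, abs_mul] using besselI1_term_le (abs_nonneg z) k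

@[fun_prop]
theorem measurable_besselI1 : Measurable besselI1 :=
  measurable_of_tendsto_metrizable
    (f := fun n z => ∑ k ∈ Finset.range n, (z / 2) ^ (2 * k + 1) / (k ! * (k + 1)! : ℝ))
    (fun n => by fun_prop) (tendsto_pi_nhds.2 fun z => (hasSum_besselI1 z).tendsto_sum_nat)

theorem half_le_besselI1 {z : ℝ} (hz : 0 ≤ z) : z / 2 ≤ besselI1 z := by
  simpa using le_hasSum (hasSum_besselI1 z) 0 fun k _ => by positivity

theorem besselI1_pos {z : ℝ} (hz : 0 < z) : 0 < besselI1 z :=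
  (half_pos hz).trans_le (half_le_besselI1 hz.le)

theorem besselI1_le_half_mul_exp {z : ℝ} (hz : 0 ≤ z) : besselI1 z ≤ z / 2 * exp z :=
  calc besselI1 z ≤ z / 2 * cosh z :=
        hasSum_le (besselI1_term_le hz) (hasSum_besselI1 z) ((hasSum_cosh z).mul_left (z / 2))
    _ ≤ z / 2 * exp z := by
        gcongr
        linarith [cosh_add_sinh z, sinh_nonneg_iff.2 hz]

theorem abs_log_besselI1_le {z : ℝ} (hz : 0 < z) : |log (besselI1 z)| ≤ |log (z / 2)| + z := by
  have hlower : log (z / 2) ≤ log (besselI1 z) :=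
    log_le_log (half_pos hz) (half_le_besselI1 hz.le)
  have hupper : log (besselI1 z) ≤ log (z / 2) + z := by
    calc log (besselI1 z) ≤ log (z / 2 * exp z) :=
          log_le_log (besselI1_pos hz) (besselI1_le_half_mul_exp hz.le)
      _ = log (z / 2) + z := by rw [log_mul (half_pos hz).ne' (exp_pos z).ne', log_exp]
  rw [abs_le]
  constructor <;> linarith [neg_abs_le (log (z / 2)), le_abs_self (log (z / 2))]

end BesselI1

section Digamma

theorem hasDerivAt_log_Gamma {x : ℝ} (hx : 0 < x) :
    HasDerivAt (fun y => log (Gamma y)) (digamma x) x :=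
  have hne : ∀ m : ℕ, x ≠ -m := fun m => by linarith [m.cast_nonneg (α := ℝ)]
  ((differentiableAt_Gamma hne).log (Gamma_pos_of_pos hx).ne').hasDerivAt

theorem digamma_add_one {x : ℝ} (hx : 0 < x) : digamma (x + 1) = digamma x + x⁻¹ := by
  have hshift : HasDerivAt (fun y => log (Gamma (y + 1))) (digamma (x + 1)) x :=
    (hasDerivAt_log_Gamma (by linarith)).comp_add_const x 1
  have hsum : HasDerivAt (fun y => log (Gamma y) + log y) (digamma x + x⁻¹) x :=
    (hasDerivAt_log_Gamma hx).add (hasDerivAt_log hx.ne')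
  refine hshift.unique (hsum.congr_of_eventuallyEq ?_)
  filter_upwards [lt_mem_nhds hx] with y hy
  rw [Gamma_add_one hy.ne', log_mul hy.ne' (Gamma_pos_of_pos hy).ne', add_comm]

theorem hasDerivAt_Gamma {x : ℝ} (hx : 0 < x) :
    HasDerivAt Gamma (Gamma x * digamma x) x := by
  refine (hasDerivAt_log_Gamma hx).exp.congr_of_eventuallyEq ?_ |>.congr_deriv ?_
  · filter_upwards [lt_mem_nhds hx] with y hy using (exp_log (Gamma_pos_of_pos hy)).symm
  · rw [exp_log (Gamma_pos_of_pos hx)]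

theorem hasBochnerIntegral_Gamma {s : ℝ} (hs : 0 < s) :
    HasBochnerIntegral (fun t => exp (-t) * t ^ (s - 1)) (Gamma s) vol₊ :=
  ⟨GammaIntegral_convergent hs, (Gamma_eq_integral hs).symm⟩

theorem hasBochnerIntegral_Gamma_log {s : ℝ} (hs : 0 < s) :
    HasBochnerIntegral (fun t => exp (-t) * t ^ (s - 1) * log t) (Gamma s * digamma s) vol₊ := by
  have hcont : Continuous fun t : ℝ => ((exp (-t) : ℝ) : ℂ) := by fun_prop
  obtain ⟨hconv, hderiv⟩ := mellin_hasDerivAt_of_isBigO_rpow (s := (s : ℂ)) (b := 0)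
    (hcont.continuousOn.locallyIntegrableOn measurableSet_Ioi)
    (by
      rw [← Asymptotics.isBigO_norm_left]
      simpa only [Complex.norm_real, Asymptotics.isBigO_norm_left, neg_one_mul]
        using (isLittleO_exp_neg_mul_rpow_atTop one_pos _).isBigO)
    (lt_add_one _)
    (by
      simpa only [neg_zero, rpow_zero] using
        (hcont.tendsto 0).mono_left nhdsWithin_le_nhds |>.isBigO_one ℝ)
    (by simpa using hs)
  have hreal : EqOn (fun t : ℝ => (t : ℂ) ^ ((s : ℂ) - 1) • log t • ((exp (-t) : ℝ) : ℂ))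
      (fun t => ((exp (-t) * t ^ (s - 1) * log t : ℝ) : ℂ)) (Ioi 0) := fun t (ht : 0 < t) => by
    simp only [smul_eq_mul, Complex.real_smul]
    push_cast [Complex.ofReal_cpow ht.le]
    ring
  have hint : IntegrableOn (fun t => exp (-t) * t ^ (s - 1) * log t) (Ioi 0) :=
    (IntegrableOn.congr_fun hconv hreal measurableSet_Ioi).re
  refine ⟨hint, HasDerivAt.unique ?_ (hasDerivAt_Gamma hs)⟩
  rw [mellin, setIntegral_congr_fun measurableSet_Ioi hreal, integral_complex_ofReal,
    ← Complex.GammaIntegral_eq_mellin] at hderiv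
  have hpos : ∀ᶠ z : ℂ in nhds s, 0 < z.re :=
    Complex.continuous_re.continuousAt.eventually (lt_mem_nhds (by simpa using hs))
  exact (hderiv.congr_of_eventuallyEq
    (hpos.mono fun z hz => Complex.Gamma_eq_integral hz)).real_of_complex

end Digamma

section Beta

open ProbabilityTheory (beta beta_pos beta_eq_betaIntegralReal)

theorem hasBochnerIntegral_beta {a b : ℝ} (ha : 0 < a) (hb : 0 < b) :
    HasBochnerIntegral (fun w => w ^ (a - 1) * (1 - w) ^ (b - 1)) (beta a b)
      (volume.restrict (Ioo 0 1)) := by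
  refine .of_integral_eq_of_ne_zero ?_ (beta_pos ha hb).ne'
  have hreal : EqOn (fun w : ℝ => (w : ℂ) ^ ((a : ℂ) - 1) * (1 - (w : ℂ)) ^ ((b : ℂ) - 1))
      (fun w => ((w ^ (a - 1) * (1 - w) ^ (b - 1) : ℝ) : ℂ)) (Ioo 0 1) := fun w hw => by
    push_cast [Complex.ofReal_cpow hw.1.le, Complex.ofReal_cpow (sub_pos.2 hw.2).le]
    rfl
  rw [beta_eq_betaIntegralReal a b ha hb, Complex.betaIntegral,
    intervalIntegral.integral_of_le zero_le_one, integral_Ioc_eq_integral_Ioo,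
    setIntegral_congr_fun measurableSet_Ioo hreal, integral_complex_ofReal, Complex.ofReal_re]

theorem hasDerivAt_beta_right {a b : ℝ} (ha : 0 < a) (hb : 0 < b) :
    HasDerivAt (beta a) (beta a b * (digamma b - digamma (a + b))) b := by
  have hGamma := (Gamma_pos_of_pos (add_pos ha hb)).ne'
  refine (((hasDerivAt_Gamma hb).const_mul (Gamma a)).div
    ((hasDerivAt_Gamma (add_pos ha hb)).comp_const_add a b) hGamma).congr_deriv ?_
  rw [beta]
  field_simp

theorem rpow_mul_abs_log_le {x ε r s : ℝ} (hx₀ : 0 < x) (hx₁ : x ≤ 1) (hε : 0 < ε)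
    (hsr : s + ε ≤ r) : x ^ r * |log x| ≤ ε⁻¹ * x ^ s := by
  have hlog : x ^ ε * |log x| ≤ ε⁻¹ := by
    have := (abs_log_mul_self_rpow_lt x ε hx₀ hx₁ hε).le
    rwa [abs_mul, abs_of_pos (rpow_pos_of_pos hx₀ ε), one_div, mul_comm] at this
  calc x ^ r * |log x| ≤ x ^ (s + ε) * |log x| :=
        mul_le_mul_of_nonneg_right (rpow_le_rpow_of_exponent_ge hx₀ hx₁ hsr) (abs_nonneg _)
    _ = x ^ ε * |log x| * x ^ s := by rw [rpow_add hx₀]; ring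
    _ ≤ ε⁻¹ * x ^ s := by gcongr

theorem hasBochnerIntegral_beta_log {a b : ℝ} (ha : 0 < a) (hb : 0 < b) :
    HasBochnerIntegral (fun w => w ^ (a - 1) * (1 - w) ^ (b - 1) * log (1 - w))
      (beta a b * (digamma b - digamma (a + b))) (volume.restrict (Ioo 0 1)) := by
  have hderiv_le : ∀ w ∈ Ioo (0 : ℝ) 1, ∀ β ∈ Ioi (b / 2),
      ‖w ^ (a - 1) * (1 - w) ^ (β - 1) * log (1 - w)‖ ≤
        (b / 4)⁻¹ * (w ^ (a - 1) * (1 - w) ^ (b / 4 - 1)) := by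
    intro w ⟨hw₀, hw₁⟩ β (hβ : b / 2 < β)
    have hu : 0 < 1 - w := sub_pos.2 hw₁
    have hlog : (1 - w) ^ (β - 1) * |log (1 - w)| ≤ (b / 4)⁻¹ * (1 - w) ^ (b / 4 - 1) :=
      rpow_mul_abs_log_le hu (by linarith) (by positivity) (by linarith)
    rw [norm_mul, Real.norm_of_nonneg (by positivity), Real.norm_eq_abs, mul_assoc,
      mul_left_comm (b / 4)⁻¹]
    exact mul_le_mul_of_nonneg_left hlog (rpow_nonneg hw₀.le _)
  have hderiv : ∀ w ∈ Ioo (0 : ℝ) 1, ∀ β ∈ Ioi (b / 2),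
      HasDerivAt (fun β => w ^ (a - 1) * (1 - w) ^ (β - 1))
        (w ^ (a - 1) * (1 - w) ^ (β - 1) * log (1 - w)) β := fun w hw β _ =>
    ((((hasDerivAt_id β).sub_const 1).const_rpow (sub_pos.2 hw.2)).const_mul _).congr_deriv
      (by simp only [id_eq]; ring)
  obtain ⟨hint, hasDeriv⟩ := hasDerivAt_integral_of_dominated_loc_of_deriv_le
    (μ := volume.restrict (Ioo 0 1)) (Ioi_mem_nhds (half_lt_self hb))
    (.of_forall fun β => by fun_prop) (hasBochnerIntegral_beta ha hb).integrable (by fun_prop)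
    (ae_restrict_of_forall_mem measurableSet_Ioo hderiv_le)
    ((hasBochnerIntegral_beta ha (by positivity)).const_mul _).integrable
    (ae_restrict_of_forall_mem measurableSet_Ioo hderiv)
  refine ⟨hint, hasDeriv.unique ((hasDerivAt_beta_right ha hb).congr_of_eventuallyEq ?_)⟩
  filter_upwards [lt_mem_nhds hb] with β hβ using (hasBochnerIntegral_beta ha hβ).integral_eq

theorem hasBochnerIntegral_exp_mul_one_sub_exp_log {a b : ℝ} (ha : 0 < a) (hb : 0 < b) :
    HasBochnerIntegral
      (fun t => exp (-(a * t)) * (1 - exp (-t)) ^ (b - 1) * log (1 - exp (-t)))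
      (beta a b * (digamma b - digamma (a + b))) vol₊ := by
  have himage : (fun t : ℝ => exp (-t)) '' Ioi 0 = Ioo 0 1 := by
    ext w
    refine ⟨fun ⟨t, (ht : 0 < t), htw⟩ => htw ▸ ⟨exp_pos _, exp_lt_one_iff.2 (neg_neg_of_pos ht)⟩,
      fun ⟨hw₀, hw₁⟩ => ⟨-log w, mem_Ioi.2 (neg_pos.2 (log_neg hw₀ hw₁)), ?_⟩⟩
    simp only [neg_neg, exp_log hw₀]
  have hinj : InjOn (fun t : ℝ => exp (-t)) (Ioi 0) := (exp_injective.comp neg_injective).injOn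
  have hderiv : ∀ t ∈ Ioi (0 : ℝ), HasDerivWithinAt (fun t => exp (-t)) (exp (-t) * -1) (Ioi 0) t :=
    fun t _ => (hasDerivAt_neg t).exp.hasDerivWithinAt
  have h := hasBochnerIntegral_beta_log ha hb
  rw [← himage, HasBochnerIntegral.image_iff measurableSet_Ioi hderiv hinj] at h
  refine h.congr_on measurableSet_Ioi fun t _ => ?_
  have hexp : exp (-(a * t)) = exp (-t) * exp (-t) ^ (a - 1) := by
    rw [← exp_mul, ← exp_add]
    ring_nf
  simp only [hexp, abs_mul, abs_neg, abs_one, abs_exp, smul_eq_mul]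
  ring

end Beta

section Rayleigh

variable {b : ℝ}

theorem HasBochnerIntegral.mul_exp_neg_mul_sq {g : ℝ → ℝ} {v : ℝ} (hb : 0 < b)
    (h : HasBochnerIntegral (fun t => exp (-t) * g t) v vol₊) :
    HasBochnerIntegral (fun x => x * exp (-(b * x ^ 2)) * g (b * x ^ 2)) (v / (2 * b)) vol₊ := by
  rw [div_eq_inv_mul]
  refine ((h.comp_mul_sq hb).const_mul (2 * b)⁻¹).congr_ae (.of_forall fun x => ?_)
  simp only [smul_eq_mul]
  field_simp

theorem hasBochnerIntegral_mul_exp_neg_mul_sq_mul_pow (hb : 0 < b) (k : ℕ) :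
    HasBochnerIntegral (fun x => x * exp (-(b * x ^ 2)) * x ^ (2 * k))
      (k.factorial / (2 * b ^ (k + 1))) vol₊ := by
  have hGamma : HasBochnerIntegral (fun t => exp (-t) * t ^ k) k.factorial vol₊ := by
    simpa only [add_sub_cancel_right, rpow_natCast, Gamma_nat_eq_factorial] using
      hasBochnerIntegral_Gamma (s := k + 1) (by positivity)
  refine ((hGamma.mul_exp_neg_mul_sq hb).const_mul (b ^ k)⁻¹).congr_ae (.of_forall fun x => ?_)
    |>.congr_val ?_
  · simp only [mul_pow, ← pow_mul]
    field_simp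
  · rw [pow_succ b k]
    field_simp

theorem hasBochnerIntegral_mul_exp_neg_mul_sq_mul_log (hb : 0 < b) :
    HasBochnerIntegral (fun x => x * exp (-(b * x ^ 2)) * log x)
      ((digamma 1 - log b) / (4 * b)) vol₊ := by
  have hlog : HasBochnerIntegral (fun t => exp (-t) * log t) (digamma 1) vol₊ := by
    simpa only [sub_self, rpow_zero, mul_one, Gamma_one, one_mul] using
      hasBochnerIntegral_Gamma_log one_pos
  have hpow := hasBochnerIntegral_mul_exp_neg_mul_sq_mul_pow hb 0
  refine (((hlog.mul_exp_neg_mul_sq hb).sub (hpow.const_mul (log b))).const_mul 2⁻¹).congr_on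
    measurableSet_Ioi (fun x (hx : 0 < x) => ?_) |>.congr_val ?_
  · simp only [log_mul hb.ne' (pow_pos hx 2).ne', log_pow]
    push_cast
    ring
  · simp only [Nat.factorial_zero]
    field_simp
    ring

theorem hasBochnerIntegral_pow_mul_exp_neg_mul_sq_mul_besselI1 {c A : ℝ} (hb : 0 < b) (hc : 0 < c)
    (m : ℕ) (hA : HasSum (fun k : ℕ => (c / 2) ^ (2 * k + 1) /
      (k.factorial * (k + 1).factorial) * ((k + m).factorial / (2 * b ^ (k + m + 1)))) A) :
    HasBochnerIntegral (fun x => x ^ (2 * m) * exp (-(b * x ^ 2)) * besselI1 (c * x)) A vol₊ := by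
  refine .of_hasSum_of_nonneg
    (fun k => (hasBochnerIntegral_mul_exp_neg_mul_sq_mul_pow hb (k + m)).const_mul _)
    (fun k => ae_restrict_of_forall_mem measurableSet_Ioi fun x (hx : 0 < x) => ?_)
    (ae_of_all _ fun x => ?_) hA
  · simp only [Pi.zero_apply]
    positivity
  · refine ((hasSum_besselI1 (c * x)).mul_left (x ^ (2 * m) * exp (-(b * x ^ 2)))).congr_fun
      fun k => ?_
    ring

theorem hasSum_pow_div_factorial (x : ℝ) : HasSum (fun k : ℕ => x ^ k / k.factorial) (exp x) := by
  rw [exp_eq_exp_ℝ]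
  exact NormedSpace.expSeries_div_hasSum_exp x

theorem hasBochnerIntegral_exp_neg_mul_sq_mul_besselI1 {c : ℝ} (hb : 0 < b) (hc : 0 < c) :
    HasBochnerIntegral (fun x => exp (-(b * x ^ 2)) * besselI1 (c * x))
      (c⁻¹ * (exp (c ^ 2 / (4 * b)) - 1)) vol₊ := by
  have htail := (hasSum_nat_add_iff' 1).2 (hasSum_pow_div_factorial (c ^ 2 / (4 * b)))
  simp only [Finset.sum_range_one, pow_zero, Nat.factorial_zero, Nat.cast_one, div_one] at htail
  have h := hasBochnerIntegral_pow_mul_exp_neg_mul_sq_mul_besselI1 hb hc 0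
    (A := c⁻¹ * (exp (c ^ 2 / (4 * b)) - 1)) ?_
  · simpa only [mul_zero, pow_zero, one_mul] using h
  · refine (htail.mul_left c⁻¹).congr_fun fun k => ?_
    rw [add_zero, show 4 * b = 2 ^ 2 * b by norm_num, div_pow (c ^ 2), mul_pow, div_pow, ← pow_mul,
      ← pow_mul]
    field_simp
    ring

theorem hasBochnerIntegral_sq_mul_exp_neg_mul_sq_mul_besselI1 {c : ℝ} (hb : 0 < b) (hc : 0 < c) :
    HasBochnerIntegral (fun x => x ^ 2 * exp (-(b * x ^ 2)) * besselI1 (c * x))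
      (c / (4 * b ^ 2) * exp (c ^ 2 / (4 * b))) vol₊ := by
  refine hasBochnerIntegral_pow_mul_exp_neg_mul_sq_mul_besselI1 hb hc 1 ?_
  refine ((hasSum_pow_div_factorial (c ^ 2 / (4 * b))).mul_left (c / (4 * b ^ 2))).congr_fun
    fun k => ?_
  rw [show 4 * b = 2 ^ 2 * b by norm_num, div_pow (c ^ 2), mul_pow, div_pow, ← pow_mul, ← pow_mul]
  field_simp
  ring

end Rayleigh

section BesselK1

theorem integral_exp_mul_of_even {g : ℝ → ℝ} (hg : Function.Even g)
    (hint : Integrable fun t => exp t * g t) :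
    ∫ t, exp t * g t = 2 * ∫ t in Ioi (0 : ℝ), g t * cosh t := by
  have hint' : Integrable fun t => exp (-t) * g t := by
    simpa only [hg _] using hint.comp_neg
  have hreflect : ∫ t, exp (-t) * g t = ∫ t, exp t * g t := by
    rw [← integral_neg_eq_self]
    simp only [neg_neg, hg _]
  have hcosh : ∫ t, g t * cosh t = ∫ t, exp t * g t := by
    rw [← add_self_div_two (∫ t, exp t * g t)]
    nth_rw 2 [← hreflect]
    rw [← integral_add hint hint', ← integral_div]
    exact integral_congr_ae (.of_forall fun t => by simp only [cosh_eq]; ring)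
  have habs (t : ℝ) : g |t| = g t := by
    rcases abs_choice t with h | h <;> simp only [h, hg _]
  rw [← hcosh, ← integral_comp_abs]
  simp only [habs, cosh_abs]

theorem hasBochnerIntegral_exp_neg_mul_add_inv {z : ℝ} (hz : 0 < z) :
    HasBochnerIntegral (fun u => exp (-(z / 2 * (u + u⁻¹)))) (2 * besselK1 z) vol₊ := by
  have hint : IntegrableOn (fun u => exp (-(z / 2 * (u + u⁻¹)))) (Ioi 0) := by
    refine (integrableOn_exp_mul_Ioi (neg_neg_of_pos (half_pos hz)) 0).mono' (by fun_prop)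
      (ae_restrict_of_forall_mem measurableSet_Ioi fun u (hu : 0 < u) => ?_)
    rw [norm_of_nonneg (exp_pos _).le, exp_le_exp, neg_mul, neg_le_neg_iff]
    gcongr
    exact le_add_of_nonneg_right (inv_pos.2 hu).le
  refine ⟨hint, ?_⟩
  have himage := HasBochnerIntegral.image_iff MeasurableSet.univ
    (fun t _ => (hasDerivAt_exp t).hasDerivWithinAt) exp_injective.injOn |>.1 <| by
      rw [image_univ, range_exp]
      exact ⟨hint, rfl⟩
  have hcosh (t : ℝ) : |exp t| • exp (-(z / 2 * (exp t + (exp t)⁻¹))) =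
      exp t * exp (-z * cosh t) := by
    rw [abs_exp, smul_eq_mul, cosh_eq, exp_neg t]
    ring_nf
  simp only [hcosh, Measure.restrict_univ] at himage
  rw [← himage.integral_eq, besselK1, ← integral_exp_mul_of_even _ himage.integrable]
  exact fun t => by rw [cosh_neg]

theorem hasBochnerIntegral_inv_cube_mul_exp {p q : ℝ} (hp : 0 < p) (hq : 0 < q) :
    HasBochnerIntegral (fun x => (x ^ 3)⁻¹ * exp (-(p ^ 2 * x ^ 2 + q ^ 2 / x ^ 2)))
      (p / q * besselK1 (2 * (p * q))) vol₊ := by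
  have himage : (fun x : ℝ => q / p * (x ^ 2)⁻¹) '' Ioi 0 = Ioi 0 := by
    ext u
    refine ⟨fun ⟨x, (hx : 0 < x), hxu⟩ => hxu ▸ mem_Ioi.2 (by positivity),
      fun (hu : 0 < u) => ⟨√(q / p / u), mem_Ioi.2 (by positivity), ?_⟩⟩
    have : 0 < q / p / u := by positivity
    simp only [sq_sqrt this.le]
    field_simp
  have hinj : InjOn (fun x : ℝ => q / p * (x ^ 2)⁻¹) (Ioi 0) :=
    fun x (hx : 0 < x) y (hy : 0 < y) hxy =>
      (pow_left_inj₀ hx.le hy.le two_ne_zero).1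
        (inv_injective (mul_left_cancel₀ (div_pos hq hp).ne' hxy))
  have hderiv : ∀ x ∈ Ioi (0 : ℝ),
      HasDerivWithinAt (fun x : ℝ => q / p * (x ^ 2)⁻¹) (-(2 * (q / p) * (x ^ 3)⁻¹)) (Ioi 0) x := by
    intro x (hx : 0 < x)
    have hinv := (hasDerivAt_pow 2 x).fun_inv (pow_pos hx 2).ne'
    refine ((hinv.const_mul (q / p)).congr_deriv ?_).hasDerivWithinAt
    field_simp
    push_cast
    ring
  have h := hasBochnerIntegral_exp_neg_mul_add_inv (z := 2 * (p * q)) (by positivity)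
  rw [← himage, HasBochnerIntegral.image_iff measurableSet_Ioi hderiv hinj] at h
  refine (h.const_mul (p / (2 * q))).congr_on measurableSet_Ioi (fun x (hx : 0 < x) => ?_)
    |>.congr_val (by ring)
  have habs : |-(2 * (q / p) * (x ^ 3)⁻¹)| = 2 * (q / p) * (x ^ 3)⁻¹ := by
    rw [abs_neg, abs_of_pos (by positivity)]
  have hexponent : 2 * (p * q) / 2 * (q / p * (x ^ 2)⁻¹ + (q / p * (x ^ 2)⁻¹)⁻¹) =
      p ^ 2 * x ^ 2 + q ^ 2 / x ^ 2 := by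
    field_simp
    ring
  simp only [habs, hexponent, smul_eq_mul]
  field_simp

end BesselK1

section OutputDensity

/-- The output density of the channel with noise power `s = σN ^ 2` and Rayleigh input of power
`S = σS ^ 2`: up to normalization, a difference of two Rayleigh densities. -/
noncomputable def outputDensity (s S y : ℝ) : ℝ :=
  2 * y / S * (exp (-((s + S)⁻¹ * y ^ 2)) - exp (-(s⁻¹ * y ^ 2)))

variable {s S : ℝ}

theorem hasBochnerIntegral_outputDensity_mul (hs : 0 < s) (hS : 0 < S) {g M : ℝ → ℝ}
    (h : ∀ b, 0 < b → HasBochnerIntegral (fun x => x * exp (-(b * x ^ 2)) * g x) (M b) vol₊) :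
    HasBochnerIntegral (fun y => outputDensity s S y * g y)
      (2 / S * (M (s + S)⁻¹ - M s⁻¹)) vol₊ := by
  refine (((h (s + S)⁻¹ (by positivity)).sub (h s⁻¹ (by positivity))).const_mul (2 / S)).congr_ae
    (.of_forall fun y => ?_)
  simp only [outputDensity]
  ring

theorem hasBochnerIntegral_outputDensity (hs : 0 < s) (hS : 0 < S) :
    HasBochnerIntegral (outputDensity s S) 1 vol₊ := by
  have h := hasBochnerIntegral_outputDensity_mul hs hS fun b hb =>
    hasBochnerIntegral_mul_exp_neg_mul_sq_mul_pow hb 0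
  simp only [mul_zero, pow_zero, mul_one, zero_add, pow_one, Nat.factorial_zero, Nat.cast_one] at h
  refine h.congr_val ?_
  field_simp
  ring

theorem hasBochnerIntegral_outputDensity_mul_sq (hs : 0 < s) (hS : 0 < S) :
    HasBochnerIntegral (fun y => outputDensity s S y * y ^ 2) (2 * s + S) vol₊ := by
  refine (hasBochnerIntegral_outputDensity_mul hs hS fun b hb =>
    hasBochnerIntegral_mul_exp_neg_mul_sq_mul_pow hb 1).congr_val ?_
  simp only [one_add_one_eq_two, Nat.factorial_one, Nat.cast_one]
  field_simp
  ring

theorem hasBochnerIntegral_outputDensity_mul_log (hs : 0 < s) (hS : 0 < S) :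
    HasBochnerIntegral (fun y => outputDensity s S y * log y)
      ((digamma 1 + (1 + s / S) * log (s + S) - s / S * log s) / 2) vol₊ := by
  refine (hasBochnerIntegral_outputDensity_mul hs hS fun b hb =>
    hasBochnerIntegral_mul_exp_neg_mul_sq_mul_log hb).congr_val ?_
  simp only [log_inv]
  field_simp
  ring

theorem outputDensity_eq_mul_one_sub_exp (s S y : ℝ) :
    outputDensity s S y = 2 / S * y * exp (-((s + S)⁻¹ * y ^ 2)) *
      (1 - exp (-((s⁻¹ - (s + S)⁻¹) * y ^ 2))) := by
  have hexp : exp (-((s + S)⁻¹ * y ^ 2)) * exp (-((s⁻¹ - (s + S)⁻¹) * y ^ 2)) =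
      exp (-(s⁻¹ * y ^ 2)) := by
    rw [← exp_add]
    ring_nf
  rw [outputDensity, ← hexp]
  ring

theorem log_outputDensity (hs : 0 < s) (hS : 0 < S) {y : ℝ} (hy : 0 < y) :
    log (outputDensity s S y) = log (2 / S) + log y - (s + S)⁻¹ * y ^ 2 +
      log (1 - exp (-((s⁻¹ - (s + S)⁻¹) * y ^ 2))) := by
  have hκ : 0 < s⁻¹ - (s + S)⁻¹ := sub_pos.2 (inv_strictAnti₀ hs (lt_add_of_pos_right s hS))
  have hlt : exp (-((s⁻¹ - (s + S)⁻¹) * y ^ 2)) < 1 :=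
    exp_lt_one_iff.2 (neg_neg_of_pos (by positivity))
  rw [outputDensity_eq_mul_one_sub_exp, log_mul (by positivity) (sub_pos.2 hlt).ne',
    log_mul (by positivity) (exp_pos _).ne', log_mul (by positivity) hy.ne', log_exp,
    ← sub_eq_add_neg]

theorem beta_two {a : ℝ} (ha : 0 < a) : ProbabilityTheory.beta a 2 = (a * (a + 1))⁻¹ := by
  have hGamma := (Gamma_pos_of_pos ha).ne'
  rw [ProbabilityTheory.beta, Gamma_two, show a + 2 = a + 1 + 1 by ring,
    Gamma_add_one (by positivity), Gamma_add_one ha.ne']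
  field_simp

theorem hasBochnerIntegral_outputDensity_mul_log_one_sub_exp (hs : 0 < s) (hS : 0 < S) :
    HasBochnerIntegral
      (fun y => outputDensity s S y * log (1 - exp (-((s⁻¹ - (s + S)⁻¹) * y ^ 2))))
      (digamma 2 - digamma (s / S + 2)) vol₊ := by
  have hκ : s⁻¹ - (s + S)⁻¹ = S / (s * (s + S)) := by
    field_simp
    ring
  have hκ₀ : 0 < s⁻¹ - (s + S)⁻¹ := hκ ▸ by positivity
  have hrate (y : ℝ) : s / S * ((s⁻¹ - (s + S)⁻¹) * y ^ 2) = (s + S)⁻¹ * y ^ 2 := by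
    rw [hκ]
    field_simp
  have h := (hasBochnerIntegral_exp_mul_one_sub_exp_log (div_pos hs hS) two_pos).comp_mul_sq hκ₀
  refine (h.const_mul ((s⁻¹ - (s + S)⁻¹) * S)⁻¹).congr_ae (.of_forall fun y => ?_) |>.congr_val ?_
  · simp only [hrate, outputDensity_eq_mul_one_sub_exp, smul_eq_mul]
    generalize s⁻¹ - (s + S)⁻¹ = κ at hκ₀
    norm_num
    field_simp
  · rw [beta_two (div_pos hs hS), hκ]
    field_simp

theorem integral_outputDensity_mul_log_self (hs : 0 < s) (hS : 0 < S) :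
    ∫ y in Ioi (0 : ℝ), outputDensity s S y * log (outputDensity s S y) =
      log (2 / S) + (digamma 1 + (1 + s / S) * log (s + S) - s / S * log s) / 2 +
        digamma 1 - digamma (s / S) - S / s - 1 := by
  have hsum := ((((hasBochnerIntegral_outputDensity hs hS).const_mul (log (2 / S))).add
    (hasBochnerIntegral_outputDensity_mul_log hs hS)).sub
    ((hasBochnerIntegral_outputDensity_mul_sq hs hS).const_mul (s + S)⁻¹)).add
    (hasBochnerIntegral_outputDensity_mul_log_one_sub_exp hs hS)
  have hlog := hsum.congr_on (g := fun y => outputDensity s S y * log (outputDensity s S y))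
    measurableSet_Ioi fun y (hy : 0 < y) => by
      simp only [log_outputDensity hs hS hy]
      ring
  have hψ_two : digamma 2 = digamma 1 + 1 := by
    rw [← one_add_one_eq_two, digamma_add_one one_pos, inv_one]
  have hψ : digamma (s / S + 2) = digamma (s / S) + (s / S)⁻¹ + (s / S + 1)⁻¹ := by
    rw [show s / S + 2 = s / S + 1 + 1 by ring, digamma_add_one (by positivity),
      digamma_add_one (by positivity)]
  rw [hlog.integral_eq, hψ_two, hψ]
  field_simp
  ring

end OutputDensity

section RayleighInput

variable {σ : ℝ}

theorem hasBochnerIntegral_rayleighDensity_mul {g : ℝ → ℝ} {v : ℝ}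
    (h : HasBochnerIntegral (fun x => x * exp (-((σ ^ 2)⁻¹ * x ^ 2)) * g x) v vol₊) :
    HasBochnerIntegral (fun x => rayleighDensity σ x * g x) (2 / σ ^ 2 * v) vol₊ := by
  refine (h.const_mul (2 / σ ^ 2)).congr_ae (.of_forall fun x => ?_)
  simp only [rayleighDensity]
  rw [neg_div, div_eq_inv_mul (x ^ 2)]
  ring

theorem hasBochnerIntegral_rayleighDensity (hσ : 0 < σ) :
    HasBochnerIntegral (rayleighDensity σ) 1 vol₊ := by
  have h := hasBochnerIntegral_rayleighDensity_mul
    (hasBochnerIntegral_mul_exp_neg_mul_sq_mul_pow (b := (σ ^ 2)⁻¹) (by positivity) 0)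
  simp only [mul_zero, pow_zero, mul_one, zero_add, pow_one, Nat.factorial_zero, Nat.cast_one] at h
  refine h.congr_val ?_
  field_simp

theorem hasBochnerIntegral_rayleighDensity_mul_sq (hσ : 0 < σ) :
    HasBochnerIntegral (fun x => rayleighDensity σ x * x ^ 2) (σ ^ 2) vol₊ := by
  refine (hasBochnerIntegral_rayleighDensity_mul
    (hasBochnerIntegral_mul_exp_neg_mul_sq_mul_pow (b := (σ ^ 2)⁻¹) (by positivity) 1)).congr_val ?_
  simp only [one_add_one_eq_two, Nat.factorial_one, Nat.cast_one]
  field_simp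

theorem hasBochnerIntegral_rayleighDensity_mul_log (hσ : 0 < σ) :
    HasBochnerIntegral (fun x => rayleighDensity σ x * log x)
      ((digamma 1 + log (σ ^ 2)) / 2) vol₊ := by
  refine (hasBochnerIntegral_rayleighDensity_mul
    (hasBochnerIntegral_mul_exp_neg_mul_sq_mul_log (b := (σ ^ 2)⁻¹) (by positivity))).congr_val ?_
  rw [log_inv]
  field_simp
  ring

end RayleighInput

section Channel

/-- The joint density of the channel input and output. -/
noncomputable def jointDensity (σN σS : ℝ) (z : ℝ × ℝ) : ℝ :=
  condDensity σN z.1 z.2 * rayleighDensity σS z.1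

variable {σN σS : ℝ}

theorem ae_pos_prod_pos : ∀ᵐ z : ℝ × ℝ ∂vol₊.prod vol₊, 0 < z.1 ∧ 0 < z.2 := by
  rw [Measure.prod_restrict]
  exact ae_restrict_mem (measurableSet_Ioi.prod measurableSet_Ioi)

@[fun_prop]
theorem measurable_jointDensity : Measurable (jointDensity σN σS) := by
  unfold jointDensity condDensity rayleighDensity
  fun_prop

theorem jointDensity_nonneg {x y : ℝ} (hx : 0 < x) (hy : 0 < y) :
    0 ≤ jointDensity σN σS (x, y) := by
  have hI : 0 ≤ besselI1 (2 * x * y / σN ^ 2) :=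
    (half_le_besselI1 (by positivity)).trans' (by positivity)
  unfold jointDensity condDensity rayleighDensity
  positivity

theorem hasBochnerIntegral_condDensity (hN : 0 < σN) {x : ℝ} (hx : 0 < x) :
    HasBochnerIntegral (condDensity σN x) 1 vol₊ := by
  have h := hasBochnerIntegral_sq_mul_exp_neg_mul_sq_mul_besselI1 (b := (σN ^ 2)⁻¹)
    (c := 2 * x / σN ^ 2) (by positivity) (by positivity)
  refine (h.const_mul (2 / (σN ^ 2 * x) * exp (-(x ^ 2 / σN ^ 2)))).congr_ae
    (.of_forall fun y => ?_) |>.congr_val ?_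
  · have hexp : exp (-(x ^ 2 + y ^ 2) / σN ^ 2) =
        exp (-(x ^ 2 / σN ^ 2)) * exp (-((σN ^ 2)⁻¹ * y ^ 2)) := by
      rw [← exp_add]
      ring_nf
    rw [condDensity, hexp, show 2 * x * y / σN ^ 2 = 2 * x / σN ^ 2 * y by ring]
    field_simp
  · rw [show (2 * x / σN ^ 2) ^ 2 / (4 * (σN ^ 2)⁻¹) = x ^ 2 / σN ^ 2 by field_simp; norm_num,
      exp_neg]
    field_simp
    norm_num

theorem hasBochnerIntegral_jointDensity_left (hN : 0 < σN) (hS : 0 < σS) {y : ℝ} (hy : 0 < y) :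
    HasBochnerIntegral (fun x => jointDensity σN σS (x, y))
      (outputDensity (σN ^ 2) (σS ^ 2) y) vol₊ := by
  have h := hasBochnerIntegral_exp_neg_mul_sq_mul_besselI1 (b := (σN ^ 2)⁻¹ + (σS ^ 2)⁻¹)
    (c := 2 * y / σN ^ 2) (by positivity) (by positivity)
  refine (h.const_mul (4 * y ^ 2 / (σN ^ 2 * σS ^ 2) * exp (-((σN ^ 2)⁻¹ * y ^ 2)))).congr_on
    measurableSet_Ioi (fun x (hx : 0 < x) => ?_) |>.congr_val ?_
  · have hexp : exp (-(x ^ 2 + y ^ 2) / σN ^ 2) * exp (-x ^ 2 / σS ^ 2) =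
        exp (-((σN ^ 2)⁻¹ * y ^ 2)) * exp (-(((σN ^ 2)⁻¹ + (σS ^ 2)⁻¹) * x ^ 2)) := by
      rw [← exp_add, ← exp_add]
      ring_nf
    calc 4 * y ^ 2 / (σN ^ 2 * σS ^ 2) * exp (-((σN ^ 2)⁻¹ * y ^ 2)) *
          (exp (-(((σN ^ 2)⁻¹ + (σS ^ 2)⁻¹) * x ^ 2)) * besselI1 (2 * y / σN ^ 2 * x))
        = 4 * y ^ 2 / (σN ^ 2 * σS ^ 2) * besselI1 (2 * y / σN ^ 2 * x) *
          (exp (-(x ^ 2 + y ^ 2) / σN ^ 2) * exp (-x ^ 2 / σS ^ 2)) := by rw [hexp]; ring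
      _ = jointDensity σN σS (x, y) := by
        rw [jointDensity, condDensity, rayleighDensity,
          show 2 * y / σN ^ 2 * x = 2 * x * y / σN ^ 2 by ring]
        field_simp
        ring
  · have hexp : exp (-((σN ^ 2)⁻¹ * y ^ 2)) *
        exp ((2 * y / σN ^ 2) ^ 2 / (4 * ((σN ^ 2)⁻¹ + (σS ^ 2)⁻¹))) =
        exp (-((σN ^ 2 + σS ^ 2)⁻¹ * y ^ 2)) := by
      rw [← exp_add]
      congr 1
      field_simp
      ring
    rw [outputDensity, ← hexp]
    field_simp
    ring

theorem hasBochnerIntegral_jointDensity_mul_fst (hN : 0 < σN) {g : ℝ → ℝ} {v : ℝ}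
    (hg : Measurable g) (h : HasBochnerIntegral (fun x => rayleighDensity σS x * g x) v vol₊) :
    HasBochnerIntegral (fun z => jointDensity σN σS z * g z.1) v (vol₊.prod vol₊) := by
  refine HasBochnerIntegral.smul_comp_fst measurable_jointDensity.aestronglyMeasurable
    hg.aestronglyMeasurable (ae_pos_prod_pos.mono fun z hz => jointDensity_nonneg hz.1 hz.2)
    (ae_restrict_of_forall_mem measurableSet_Ioi fun x (hx : 0 < x) => ?_) h
  simpa only [jointDensity, one_mul, mul_one, mul_comm (rayleighDensity σS x)] using
    (hasBochnerIntegral_condDensity hN hx).const_mul (rayleighDensity σS x)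

theorem hasBochnerIntegral_jointDensity_mul_snd (hN : 0 < σN) (hS : 0 < σS) {g : ℝ → ℝ} {v : ℝ}
    (hg : Measurable g)
    (h : HasBochnerIntegral (fun y => outputDensity (σN ^ 2) (σS ^ 2) y * g y) v vol₊) :
    HasBochnerIntegral (fun z => jointDensity σN σS z * g z.2) v (vol₊.prod vol₊) :=
  HasBochnerIntegral.smul_comp_snd measurable_jointDensity.aestronglyMeasurable
    hg.aestronglyMeasurable (ae_pos_prod_pos.mono fun _ hz => jointDensity_nonneg hz.1 hz.2)
    (ae_restrict_of_forall_mem measurableSet_Ioi fun _ hy =>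
      hasBochnerIntegral_jointDensity_left hN hS hy) h

theorem hasBochnerIntegral_jointDensity (hN : 0 < σN) (hS : 0 < σS) :
    HasBochnerIntegral (jointDensity σN σS) 1 (vol₊.prod vol₊) := by
  simpa only [mul_one] using hasBochnerIntegral_jointDensity_mul_fst hN (g := fun _ => 1)
    measurable_const (by simpa only [mul_one] using hasBochnerIntegral_rayleighDensity hS)

theorem hasBochnerIntegral_jointDensity_mul_log_fst (hN : 0 < σN) (hS : 0 < σS) :
    HasBochnerIntegral (fun z => jointDensity σN σS z * log z.1)
      ((digamma 1 + log (σS ^ 2)) / 2) (vol₊.prod vol₊) :=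
  hasBochnerIntegral_jointDensity_mul_fst hN measurable_log
    (hasBochnerIntegral_rayleighDensity_mul_log hS)

theorem hasBochnerIntegral_jointDensity_mul_log_snd (hN : 0 < σN) (hS : 0 < σS) :
    HasBochnerIntegral (fun z => jointDensity σN σS z * log z.2)
      ((digamma 1 + (1 + σN ^ 2 / σS ^ 2) * log (σN ^ 2 + σS ^ 2) -
        σN ^ 2 / σS ^ 2 * log (σN ^ 2)) / 2) (vol₊.prod vol₊) :=
  hasBochnerIntegral_jointDensity_mul_snd hN hS measurable_log
    (hasBochnerIntegral_outputDensity_mul_log (pow_pos hN 2) (pow_pos hS 2))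

theorem hasBochnerIntegral_jointDensity_mul_sq_add_sq (hN : 0 < σN) (hS : 0 < σS) :
    HasBochnerIntegral (fun z => jointDensity σN σS z * (z.1 ^ 2 + z.2 ^ 2))
      (σS ^ 2 + (2 * σN ^ 2 + σS ^ 2)) (vol₊.prod vol₊) := by
  have hfst := hasBochnerIntegral_jointDensity_mul_fst hN (by fun_prop)
    (hasBochnerIntegral_rayleighDensity_mul_sq hS)
  have hsnd := hasBochnerIntegral_jointDensity_mul_snd hN hS (by fun_prop)
    (hasBochnerIntegral_outputDensity_mul_sq (pow_pos hN 2) (pow_pos hS 2))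
  simpa only [mul_add] using hfst.add hsnd

theorem abs_log_besselI1_two_mul_div_le {x y s : ℝ} (hx : 0 < x) (hy : 0 < y) (hs : 0 < s) :
    |log (besselI1 (2 * x * y / s))| ≤
      |log x| + |log y| + |log s| + s⁻¹ * (x ^ 2 + y ^ 2) := by
  have hlog : log (2 * x * y / s / 2) = log x + log y - log s := by
    rw [show 2 * x * y / s / 2 = x * y / s by ring, log_div (mul_pos hx hy).ne' hs.ne',
      log_mul hx.ne' hy.ne']
  have hamgm : 2 * x * y / s ≤ s⁻¹ * (x ^ 2 + y ^ 2) := by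
    rw [div_eq_inv_mul]
    gcongr
    exact two_mul_le_add_sq x y
  calc |log (besselI1 (2 * x * y / s))|
      ≤ |log x + log y - log s| + 2 * x * y / s := hlog ▸ abs_log_besselI1_le (by positivity)
    _ ≤ |log x| + |log y| + |log s| + s⁻¹ * (x ^ 2 + y ^ 2) := by
        gcongr
        exact (abs_sub _ _).trans (by gcongr; exact abs_add_le _ _)

theorem integrable_jointDensity_mul_log_besselI1 (hN : 0 < σN) (hS : 0 < σS) :
    Integrable (fun z => jointDensity σN σS z * log (besselI1 (2 * z.1 * z.2 / σN ^ 2)))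
      (vol₊.prod vol₊) := by
  have hone := (hasBochnerIntegral_jointDensity hN hS).integrable
  have hlog_fst := (hasBochnerIntegral_jointDensity_mul_log_fst hN hS).integrable
  have hlog_snd := (hasBochnerIntegral_jointDensity_mul_log_snd hN hS).integrable
  have hsq := (hasBochnerIntegral_jointDensity_mul_sq_add_sq hN hS).integrable
  refine Integrable.mono' (((hlog_fst.norm.add hlog_snd.norm).add
    (hone.norm.mul_const |log (σN ^ 2)|)).add (hsq.norm.const_mul (σN ^ 2)⁻¹)) (by fun_prop) ?_
  filter_upwards [ae_pos_prod_pos] with z ⟨hx, hy⟩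
  have hle := abs_log_besselI1_two_mul_div_le hx hy (pow_pos hN 2)
  simp only [Pi.add_apply, norm_mul, norm_eq_abs,
    abs_of_nonneg (add_nonneg (sq_nonneg z.1) (sq_nonneg z.2))]
  calc |jointDensity σN σS z| * |log (besselI1 (2 * z.1 * z.2 / σN ^ 2))|
      ≤ |jointDensity σN σS z| * (|log z.1| + |log z.2| + |log (σN ^ 2)| +
        (σN ^ 2)⁻¹ * (z.1 ^ 2 + z.2 ^ 2)) := by gcongr
    _ = _ := by ring

theorem jointDensity_rescale (hN : 0 < σN) {x : ℝ} (hx : 0 < x) (ξ : ℝ) :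
    σN ^ 2 / (2 * x) * jointDensity σN σS (x, σN ^ 2 / (2 * x) * ξ) =
      σN ^ 4 / (2 * σS ^ 2) * ξ ^ 2 * besselI1 ξ * ((x ^ 3)⁻¹ *
        exp (-(((σN ^ 2)⁻¹ + (σS ^ 2)⁻¹) * x ^ 2 + (σN * ξ / 2) ^ 2 / x ^ 2))) := by
  have hexp : exp (-(((σN ^ 2)⁻¹ + (σS ^ 2)⁻¹) * x ^ 2 + (σN * ξ / 2) ^ 2 / x ^ 2)) =
      exp (-(x ^ 2 + (σN ^ 2 / (2 * x) * ξ) ^ 2) / σN ^ 2) * exp (-x ^ 2 / σS ^ 2) := by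
    rw [← exp_add]
    congr 1
    field_simp
    ring
  rw [jointDensity, condDensity, rayleighDensity, hexp,
    show 2 * x * (σN ^ 2 / (2 * x) * ξ) / σN ^ 2 = ξ by field_simp]
  field_simp

theorem hasBochnerIntegral_jointDensity_rescale (hN : 0 < σN) (hS : 0 < σS) {ξ : ℝ} (hξ : 0 < ξ) :
    HasBochnerIntegral
      (fun x => σN ^ 2 / (2 * x) * jointDensity σN σS (x, σN ^ 2 / (2 * x) * ξ))
      ((σS ^ 2 / σN ^ 2)⁻¹ * √(1 + (σS ^ 2 / σN ^ 2)⁻¹) *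
        (ξ * besselK1 (√(1 + (σS ^ 2 / σN ^ 2)⁻¹) * ξ) * besselI1 ξ)) vol₊ := by
  have hp_sq : √((σN ^ 2)⁻¹ + (σS ^ 2)⁻¹) ^ 2 = (σN ^ 2)⁻¹ + (σS ^ 2)⁻¹ := sq_sqrt (by positivity)
  have hsqrt : √(1 + (σS ^ 2 / σN ^ 2)⁻¹) = √((σN ^ 2)⁻¹ + (σS ^ 2)⁻¹) * σN := by
    rw [sqrt_eq_iff_eq_sq (by positivity) (by positivity), mul_pow, hp_sq]
    field_simp
  have h := hasBochnerIntegral_inv_cube_mul_exp (p := √((σN ^ 2)⁻¹ + (σS ^ 2)⁻¹))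
    (q := σN * ξ / 2) (by positivity) (by positivity)
  rw [hp_sq] at h
  refine (h.const_mul (σN ^ 4 / (2 * σS ^ 2) * ξ ^ 2 * besselI1 ξ)).congr_on measurableSet_Ioi
    (fun x hx => (jointDensity_rescale hN hx ξ).symm) |>.congr_val ?_
  rw [hsqrt, show 2 * (√((σN ^ 2)⁻¹ + (σS ^ 2)⁻¹) * (σN * ξ / 2)) =
    √((σN ^ 2)⁻¹ + (σS ^ 2)⁻¹) * σN * ξ by ring]
  field_simp

theorem hasBochnerIntegral_jointDensity_mul_log_besselI1 (hN : 0 < σN) (hS : 0 < σS) :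
    HasBochnerIntegral
      (fun z => jointDensity σN σS z * log (besselI1 (2 * z.1 * z.2 / σN ^ 2)))
      ((σS ^ 2 / σN ^ 2)⁻¹ * √(1 + (σS ^ 2 / σN ^ 2)⁻¹) * Fint (σS ^ 2 / σN ^ 2))
      (vol₊.prod vol₊) := by
  have hint := integrable_jointDensity_mul_log_besselI1 hN hS
  have hrescale := (HasBochnerIntegral.comp_mul_snd (r := fun x => σN ^ 2 / (2 * x))
    (Measurable.stronglyMeasurable (by fun_prop)) (by fun_prop)
    (ae_restrict_of_forall_mem measurableSet_Ioi fun x (hx : 0 < x) => by positivity)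
    ⟨hint, rfl⟩).congr_ae (g := fun z => σN ^ 2 / (2 * z.1) *
      jointDensity σN σS (z.1, σN ^ 2 / (2 * z.1) * z.2) * log (besselI1 z.2)) <| by
    filter_upwards [ae_pos_prod_pos] with z ⟨hx, _⟩
    rw [smul_eq_mul, show 2 * z.1 * (σN ^ 2 / (2 * z.1) * z.2) / σN ^ 2 = z.2 by field_simp,
      mul_assoc]
  refine ⟨hint, ?_⟩
  rw [← hrescale.integral_eq, integral_prod_symm _ hrescale.integrable, Fint, ← integral_const_mul]
  refine setIntegral_congr_fun measurableSet_Ioi fun ξ hξ => ?_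
  simp only [integral_mul_const, (hasBochnerIntegral_jointDensity_rescale hN hS hξ).integral_eq]
  ring

theorem log_condDensity (hN : 0 < σN) {x y : ℝ} (hx : 0 < x) (hy : 0 < y) :
    log (condDensity σN x y) = log (2 / σN ^ 2) + (2 * log y - log x) -
      (σN ^ 2)⁻¹ * (x ^ 2 + y ^ 2) + log (besselI1 (2 * x * y / σN ^ 2)) := by
  have hI := besselI1_pos (show 0 < 2 * x * y / σN ^ 2 by positivity)
  rw [condDensity, log_mul (by positivity) hI.ne', log_mul (by positivity) (exp_pos _).ne',
    log_mul (by positivity) (by positivity), log_exp, log_div (pow_pos hy 2).ne' hx.ne', log_pow]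
  push_cast
  ring

theorem hasBochnerIntegral_jointDensity_mul_log_condDensity (hN : 0 < σN) (hS : 0 < σS) :
    HasBochnerIntegral (fun z => jointDensity σN σS z * log (condDensity σN z.1 z.2))
      (log (2 / σN ^ 2) + (digamma 1 + (1 + σN ^ 2 / σS ^ 2) * log (σN ^ 2 + σS ^ 2) -
        σN ^ 2 / σS ^ 2 * log (σN ^ 2)) - (digamma 1 + log (σS ^ 2)) / 2 - 2 -
        2 * (σS ^ 2 / σN ^ 2) +
        (σS ^ 2 / σN ^ 2)⁻¹ * √(1 + (σS ^ 2 / σN ^ 2)⁻¹) * Fint (σS ^ 2 / σN ^ 2))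
      (vol₊.prod vol₊) := by
  have hlog := ((hasBochnerIntegral_jointDensity_mul_log_snd hN hS).const_mul 2).sub
    (hasBochnerIntegral_jointDensity_mul_log_fst hN hS)
  have hsq := (hasBochnerIntegral_jointDensity_mul_sq_add_sq hN hS).const_mul (σN ^ 2)⁻¹
  refine (((((hasBochnerIntegral_jointDensity hN hS).const_mul (log (2 / σN ^ 2))).add hlog).sub
    hsq).add
    (hasBochnerIntegral_jointDensity_mul_log_besselI1 hN hS)).congr_ae ?_ |>.congr_val ?_
  · filter_upwards [ae_pos_prod_pos] with z ⟨hx, hy⟩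
    rw [log_condDensity hN hx hy]
    ring
  · field_simp
    ring

theorem integral_rayleighDensity_mul_integral_condDensity_mul_log (hN : 0 < σN) (hS : 0 < σS) :
    ∫ x in Ioi (0 : ℝ), rayleighDensity σS x *
        ∫ y in Ioi (0 : ℝ), condDensity σN x y * log (condDensity σN x y) =
      log (2 / σN ^ 2) + (digamma 1 + (1 + σN ^ 2 / σS ^ 2) * log (σN ^ 2 + σS ^ 2) -
        σN ^ 2 / σS ^ 2 * log (σN ^ 2)) - (digamma 1 + log (σS ^ 2)) / 2 - 2 -
        2 * (σS ^ 2 / σN ^ 2) +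
        (σS ^ 2 / σN ^ 2)⁻¹ * √(1 + (σS ^ 2 / σN ^ 2)⁻¹) * Fint (σS ^ 2 / σN ^ 2) := by
  have h := hasBochnerIntegral_jointDensity_mul_log_condDensity hN hS
  rw [← h.integral_eq, integral_prod _ h.integrable]
  simp only [jointDensity, ← integral_const_mul]
  congr! 4
  ring

end Channel

/-- Theorem 1: closed form for the mutual information I_XY = h_Y − h_{Y|X}. -/
theorem stmt_5 (σN σS ρ : ℝ) (hσN : 0 < σN) (hσS : 0 < σS) (hρ : ρ = σS ^ 2 / σN ^ 2)
    (pY : ℝ → ℝ)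
    (hpY : ∀ y : ℝ, pY y = ∫ x in Ioi (0 : ℝ), condDensity σN x y * rayleighDensity σS x)
    (hY hYX : ℝ)
    (hhY : hY = -∫ y in Ioi (0 : ℝ), pY y * Real.log (pY y))
    (hhYX : hYX = -∫ x in Ioi (0 : ℝ), rayleighDensity σS x *
        ∫ y in Ioi (0 : ℝ), condDensity σN x y * Real.log (condDensity σN x y)) :
    hY - hYX =
      Real.log (ρ * Real.sqrt (1 + ρ⁻¹)) + ρ⁻¹ * Real.log (Real.sqrt (1 + ρ)) - ρ +
        ρ⁻¹ * Real.sqrt (1 + ρ⁻¹) * Fint ρ + digamma ρ⁻¹ - digamma 1 - 1 := by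
  have hs : 0 < σN ^ 2 := pow_pos hσN 2
  have hS : 0 < σS ^ 2 := pow_pos hσS 2
  have hρ₀ : 0 < ρ := hρ ▸ div_pos hS hs
  have hpY_eq : EqOn pY (outputDensity (σN ^ 2) (σS ^ 2)) (Ioi 0) := fun y hy =>
    (hpY y).trans (hasBochnerIntegral_jointDensity_left hσN hσS hy).integral_eq
  rw [setIntegral_congr_fun measurableSet_Ioi fun y hy => by rw [hpY_eq hy],
    integral_outputDensity_mul_log_self hs hS] at hhY
  rw [integral_rayleighDensity_mul_integral_condDensity_mul_log hσN hσS, ← hρ] at hhYX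
  have hinv : σN ^ 2 / σS ^ 2 = ρ⁻¹ := by rw [hρ, inv_div]
  have hlog_S : log (σS ^ 2) = log ρ + log (σN ^ 2) := by
    rw [hρ, ← log_mul (div_pos hS hs).ne' hs.ne', div_mul_cancel₀ _ hs.ne']
  have hlog_add : log (σN ^ 2 + σS ^ 2) = log (1 + ρ) + log (σN ^ 2) := by
    rw [hρ, ← log_mul (by positivity) hs.ne', add_mul, one_mul, div_mul_cancel₀ _ hs.ne']
  have hlog_ρ : log (ρ * √(1 + ρ⁻¹)) = (log ρ + log (1 + ρ)) / 2 := by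
    rw [log_mul hρ₀.ne' (by positivity), log_sqrt (by positivity),
      show 1 + ρ⁻¹ = (1 + ρ) / ρ by field_simp; ring, log_div (by positivity) hρ₀.ne']
    ring
  rw [hhY, hhYX, hinv, ← hρ, log_div two_ne_zero hs.ne', log_div two_ne_zero hS.ne', hlog_ρ,
    log_sqrt (by positivity), hlog_add, hlog_S]
  ring
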